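/- Let M be a maximum weight matching of G, u a node of G with copies u^1,…,u^β in φ(G), and for each i let ρ(u^i) = 0 if there is an even-length alternating path for φ(M) starting at u^i and ρ(u^i) = 1 otherwise. Then Σ_{1≤i≤β} ρ(u^i) = mwm(G) − mwm(G − {u}), where G − {u} is G with node u and its incident edges deleted. -/

import Mathlib

open Finset

variable {V : Type*} [Fintype V] [DecidableEq V]

/-- `C` is a (weighted vertex) cover of the bipartite graph on parts `X`, `Y`
with edge weights `w` (where `w x y = 0` means no edge). -/
def IsCover (X Y : Finset V) (w : V → V → ℕ) (C : V → ℕ) : Prop :=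
  ∀ x ∈ X, ∀ y ∈ Y, w x y ≤ C x + C y

/-- The weight of a cover: the sum of its values over all nodes. -/
def coverWt (X Y : Finset V) (C : V → ℕ) : ℕ := ∑ u ∈ X ∪ Y, C u

/-- `M` is a matching of the weighted bipartite graph: a set of pairwise
node-disjoint edges, each going from `X` to `Y` with positive weight. -/
def IsBMatching (X Y : Finset V) (w : V → V → ℕ) (M : Finset (V × V)) : Prop :=
  (∀ e ∈ M, e.1 ∈ X ∧ e.2 ∈ Y ∧ 0 < w e.1 e.2) ∧
  (∀ e ∈ M, ∀ f ∈ M, e ≠ f → e.1 ≠ f.1 ∧ e.2 ≠ f.2)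

/-- The total weight of a matching. -/
def mWt (w : V → V → ℕ) (M : Finset (V × V)) : ℕ := ∑ e ∈ M, w e.1 e.2

open Classical in
/-- The maximum weight of a matching of the bipartite graph `(X, Y, w)`. -/
noncomputable def mwm (X Y : Finset V) (w : V → V → ℕ) : ℕ :=
  Finset.sup ((Finset.univ : Finset (V × V)).powerset.filter fun M => IsBMatching X Y w M)
    fun M => mWt w M

/-- The minimum weight of a cover of the bipartite graph `(X, Y, w)`. -/
noncomputable def mwc (X Y : Finset V) (w : V → V → ℕ) : ℕ :=
  sInf {n : ℕ | ∃ C : V → ℕ, IsCover X Y w C ∧ coverWt X Y C = n}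

/-- Adjacency in the unfolded graph `φ(G)`: the copies `u^i` of a node `u` are the
pairs `(u, i)` with `i ≥ 1`, and for each edge `uv` of weight `β = w u v` the
unfolded graph has the (unweighted) edges `u^i v^{β+1-i}` for `1 ≤ i ≤ β`. -/
def phiAdj (X Y : Finset V) (w : V → V → ℕ) (a b : V × ℕ) : Prop :=
  (a.1 ∈ X ∧ b.1 ∈ Y ∧ 1 ≤ a.2 ∧ 1 ≤ b.2 ∧ 0 < w a.1 b.1 ∧ a.2 + b.2 = w a.1 b.1 + 1) ∨
  (b.1 ∈ X ∧ a.1 ∈ Y ∧ 1 ≤ b.2 ∧ 1 ≤ a.2 ∧ 0 < w b.1 a.1 ∧ b.2 + a.2 = w b.1 a.1 + 1)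

/-- `M` is a matching (set of pairwise node-disjoint edges) of the unweighted
graph with adjacency relation `adj`. -/
def IsUMatching {α : Type*} (adj : α → α → Prop) (M : Finset (α × α)) : Prop :=
  (∀ e ∈ M, adj e.1 e.2) ∧ (∀ e ∈ M, e.1 ≠ e.2) ∧
  (∀ e ∈ M, ∀ f ∈ M, e ≠ f →
    e.1 ≠ f.1 ∧ e.1 ≠ f.2 ∧ e.2 ≠ f.1 ∧ e.2 ≠ f.2)

/-- The unfolding `φ(M)` of a matching `M` of `G`: each edge `uv ∈ M` of weight
`β` contributes the edges `u^1 v^β, …, u^β v^1`. -/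
def phiM (w : V → V → ℕ) (M : Finset (V × V)) : Finset ((V × ℕ) × (V × ℕ)) :=
  M.biUnion fun e =>
    (Finset.Icc 1 (w e.1 e.2)).image fun i => ((e.1, i), (e.2, w e.1 e.2 + 1 - i))

/-- The number of copies of a node `u` in the unfolded graph: the maximum weight
of an edge incident to `u`. -/
def alphaCopies (X Y : Finset V) (w : V → V → ℕ) (u : V) : ℕ :=
  (X ∪ Y).sup fun v => max (w u v) (w v u)

/-- The (undirected) edge `ab` belongs to the matching `M`. -/
def inMatch {α : Type*} (M : Finset (α × α)) (a b : α) : Prop :=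
  (a, b) ∈ M ∨ (b, a) ∈ M

/-- The node `a` is matched by the matching `M`. -/
def matchedBy {α : Type*} (M : Finset (α × α)) (a : α) : Prop :=
  ∃ e ∈ M, e.1 = a ∨ e.2 = a

/-- `p` is an alternating path for the matching `M` in the graph with adjacency
relation `adj`: a nonempty simple path whose edges alternate between `M` and its
complement (edge `i` is in `M` iff `i % 2 = r`, for a fixed phase `r`), and which
contains the matched edge of each of its endpoints that is matched by `M`.
In particular a zero-length path consists of a single unmatched node. -/
def IsAltPath {α : Type*} (adj : α → α → Prop) (M : Finset (α × α))
    (p : List α) : Prop :=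
  p ≠ [] ∧ p.Nodup ∧ List.Chain' adj p ∧
  ∃ r : ℕ,
    (∀ i, ∀ h : i + 1 < p.length,
      (inMatch M (p.get ⟨i, Nat.lt_of_succ_lt h⟩) (p.get ⟨i + 1, h⟩) ↔ i % 2 = r)) ∧
    (∀ h : p ≠ [], matchedBy M (p.head h) → 1 < p.length ∧ r = 0) ∧
    (∀ h : p ≠ [], matchedBy M (p.getLast h) → 1 < p.length ∧ (p.length - 2) % 2 = r)

/-- There is an even-length (possibly zero-length) alternating path for `M`
starting at `a`.  (A path on `k` nodes has `k - 1` edges, so even length means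
an odd number of nodes.) -/
def EvenAltFrom {α : Type*} (adj : α → α → Prop) (M : Finset (α × α))
    (a : α) : Prop :=
  ∃ p : List α, IsAltPath adj M p ∧ p.length % 2 = 1 ∧ ∃ h : p ≠ [], p.head h = a

/-!
By Egerváry's theorem, both sides of the formula are the greatest value that an optimal cover `C` of
`G` takes at `u`. On the one hand, deleting `u` from an optimal cover leaves a cover of `G - {u}`,
so `C u ≤ mwm G - mwm (G - {u})`; equality is attained by lowering all edges at `u` by this
difference, which gives a graph of matching weight `mwm (G - {u})`, and adding the difference at `u`
to an optimal cover of it. On the other hand, an optimal cover `C` is also a vertex cover of `φ(G)`,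
consisting of the copies `v^1, …, v^(C v)`. It contains exactly one end of each edge of `φ(M)`, so
no even-length alternating path starts in it. Conversely, the minimum vertex cover of `φ(G)` that is
largest on the side of `u` contains every copy of `u` from which no such path starts, and counting
the copies of each node in it gives an optimal cover of `G`.
-/

section AlternatingPaths

variable {α : Type*} {adj : α → α → Prop} {N : Finset (α × α)} {a b y : α}

lemma inMatch_comm : inMatch N a b ↔ inMatch N b a := or_comm

lemma IsUMatching.adj_of_inMatch [Std.Symm adj] (hN : IsUMatching adj N) (h : inMatch N a b) :
    adj a b :=
  h.elim (hN.1 _) fun h ↦ symm_of adj (hN.1 _ h)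

lemma IsUMatching.inMatch_right_unique (hN : IsUMatching adj N) (ha : inMatch N a y)
    (hb : inMatch N b y) : a = b := by
  have hdisj := hN.2.2
  rcases ha with ha | ha <;> rcases hb with hb | hb <;> by_contra hab
  · exact (hdisj _ ha _ hb (by simp [hab])).2.2.2 rfl
  · have := hdisj _ ha _ hb
    grind
  · have := hdisj _ ha _ hb
    grind
  · exact (hdisj _ ha _ hb (by simp [hab])).1 rfl

/-- The even-length alternating paths, as lists of nodes, in a form suited to induction: the first
edge, if there is one, is matched, and the last node is unmatched. -/
inductive IsEvenAltPath (adj : α → α → Prop) (N : Finset (α × α)) : List α → Prop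
  | singleton {a : α} : ¬ matchedBy N a → IsEvenAltPath adj N [a]
  | cons_cons {a y b : α} {p : List α} : a ∉ y :: b :: p → y ∉ b :: p → adj a y → adj y b →
      inMatch N a y → ¬ inMatch N y b → IsEvenAltPath adj N (b :: p) →
      IsEvenAltPath adj N (a :: y :: b :: p)

/-- The edges of the list of nodes `p` alternate between `N` and its complement, the first one
being in `N`. -/
def IsAlternating (N : Finset (α × α)) (p : List α) : Prop :=
  ∀ i, ∀ h : i + 1 < p.length, (inMatch N p[i] p[i + 1] ↔ i % 2 = 0)

lemma isAlternating_cons_cons_iff {p : List α} : IsAlternating N (a :: y :: b :: p) ↔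
    inMatch N a y ∧ ¬ inMatch N y b ∧ IsAlternating N (b :: p) := by
  constructor
  · intro h
    exact ⟨(h 0 (by simp)).2 rfl, (h 1 (by simp)).not.2 (by simp),
      fun i hi ↦ (h (i + 2) (by grind)).trans (by simp)⟩
  · rintro ⟨hay, hyb, h⟩ (_ | _ | i) hi
    · exact iff_of_true hay rfl
    · exact iff_of_false hyb (by simp)
    · exact (h i (by grind)).trans (by grind)

lemma IsEvenAltPath.of_isAlternating :
    ∀ {p : List α} (hp : p ≠ []), p.Nodup → p.IsChain adj → p.length % 2 = 1 →
      IsAlternating N p → ¬ matchedBy N (p.getLast hp) → IsEvenAltPath adj N p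
  | [_], _, _, _, _, _, hlast => .singleton hlast
  | [_, _], _, _, _, hodd, _, _ => by simp at hodd
  | a :: y :: b :: p, _, hnodup, hchain, hodd, halt, hlast => by
    obtain ⟨ha, hy, hnodup⟩ : a ∉ y :: b :: p ∧ y ∉ b :: p ∧ (b :: p).Nodup := by
      simpa only [List.nodup_cons] using hnodup
    obtain ⟨hay, hyb, hchain⟩ : adj a y ∧ adj y b ∧ (b :: p).IsChain adj := by
      simpa only [List.isChain_cons_cons] using hchain
    obtain ⟨hNay, hNyb, halt⟩ := isAlternating_cons_cons_iff.1 halt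
    exact .cons_cons ha hy hay hyb hNay hNyb
      (of_isAlternating (by simp) hnodup hchain (by grind) halt (by simpa using hlast))

lemma IsEvenAltPath.isAlternating {p : List α} (h : IsEvenAltPath adj N p) :
    p.Nodup ∧ p.IsChain adj ∧ p.length % 2 = 1 ∧
      IsAlternating N p ∧ ∀ hp : p ≠ [], ¬ matchedBy N (p.getLast hp) := by
  induction h with
  | singleton ha => simpa [IsAlternating] using ha
  | cons_cons ha hy hay hyb hNay hNyb _ ih =>
    obtain ⟨hnodup, hchain, hodd, halt, hlast⟩ := ih
    exact ⟨.cons ha (.cons hy hnodup), .cons_cons hay (.cons_cons hyb hchain), by grind,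
      isAlternating_cons_cons_iff.2 ⟨hNay, hNyb, halt⟩, by simpa using hlast⟩

lemma evenAltFrom_iff : EvenAltFrom adj N a ↔ ∃ p, IsEvenAltPath adj N (a :: p) := by
  constructor
  · rintro ⟨p, ⟨-, hnodup, hchain, r, halt, hhead, hlast⟩, hodd, hp, rfl⟩
    by_cases hmat : matchedBy N (p.head hp)
    · obtain ⟨-, rfl⟩ := hhead hp hmat
      refine ⟨p.tail, ?_⟩
      rw [List.cons_head_tail]
      exact .of_isAlternating hp hnodup hchain hodd halt fun h ↦ by grind
    · exact ⟨[], .singleton hmat⟩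
  · rintro ⟨p, hp⟩
    obtain ⟨hnodup, hchain, hodd, halt, hlast⟩ := hp.isAlternating
    refine ⟨a :: p, ⟨by simp, hnodup, hchain, 0, halt, fun h hmat ↦ ⟨?_, rfl⟩,
      fun h hmat ↦ (hlast h hmat).elim⟩, hodd, by simp, rfl⟩
    cases hp with
    | singleton ha => exact (ha hmat).elim
    | cons_cons => simp

lemma evenAltFrom_of_not_matchedBy (h : ¬ matchedBy N a) : EvenAltFrom adj N a :=
  evenAltFrom_iff.2 ⟨[], .singleton h⟩

lemma IsEvenAltPath.evenAltFrom_of_mem {S : Set α} (hS : ∀ a b, adj a b → (a ∈ S ↔ b ∉ S))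
    {p : List α} (hp : IsEvenAltPath adj N p) (hhead : ∀ a ∈ p.head?, a ∈ S) {c : α} (hc : c ∈ p) :
    (c ∈ S → EvenAltFrom adj N c) ∧ (c ∉ S → ∃ x, inMatch N x c ∧ EvenAltFrom adj N x) := by
  induction hp with
  | singleton ha =>
    obtain rfl := List.mem_singleton.1 hc
    exact ⟨fun _ ↦ evenAltFrom_of_not_matchedBy ha, fun h ↦ (h (hhead _ rfl)).elim⟩
  | @cons_cons a y b p ha hy hay hyb hNay hNyb hp ih =>
    have haE : EvenAltFrom adj N a :=
      evenAltFrom_iff.2 ⟨_, .cons_cons ha hy hay hyb hNay hNyb hp⟩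
    have haS : a ∈ S := hhead a rfl
    have hyS : y ∉ S := (hS a y hay).1 haS
    have hbS : b ∈ S := by simpa [hyS] using hS y b hyb
    rcases hc with _ | ⟨_, _ | ⟨_, hc⟩⟩
    · exact ⟨fun _ ↦ haE, fun h ↦ (h haS).elim⟩
    · exact ⟨fun h ↦ (hyS h).elim, fun _ ↦ ⟨a, hNay, haE⟩⟩
    · exact ih (by simpa using hbS) hc

/-- Prepending the edges `by` and `ya` to a path from `a` may revisit one of its nodes, in which
case a final segment of the path already starts at `b`. -/
lemma EvenAltFrom.extend [Std.Symm adj] (hN : IsUMatching adj N) {S : Set α}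
    (hS : ∀ a b, adj a b → (a ∈ S ↔ b ∉ S)) (hby : inMatch N b y) (hya : adj y a)
    (ha : EvenAltFrom adj N a) : EvenAltFrom adj N b := by
  by_cases hNya : inMatch N y a
  · rwa [hN.inMatch_right_unique hby (inMatch_comm.1 hNya)]
  wlog haS : a ∈ S generalizing S
  · exact this (S := Sᶜ) (fun c d hcd ↦ not_congr (hS c d hcd)) haS
  have hyS : y ∉ S := fun hy ↦ (hS y a hya).1 hy haS
  have hbS : b ∈ S := (hS b y (hN.adj_of_inMatch hby)).2 hyS
  obtain ⟨p, hp⟩ := evenAltFrom_iff.1 ha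
  by_cases hb : b ∈ a :: p
  · exact (hp.evenAltFrom_of_mem hS (by simpa using haS) hb).1 hbS
  by_cases hy : y ∈ a :: p
  · obtain ⟨x, hxy, hx⟩ := (hp.evenAltFrom_of_mem hS (by simpa using haS) hy).2 hyS
    rwa [hN.inMatch_right_unique hby hxy]
  have hbyp : b ∉ y :: a :: p := List.not_mem_cons_of_ne_of_not_mem (by grind) hb
  exact evenAltFrom_iff.2
    ⟨_, .cons_cons hbyp hy (hN.adj_of_inMatch hby) hya hby hNya hp⟩

end AlternatingPaths

section KonigCovers

variable {α : Type*} {adj : α → α → Prop} {N : Finset (α × α)} {K : Set α}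

/-- A Kőnig cover for a matching `N`: a vertex cover consisting of exactly one end of each edge of
`N`. It certifies that `N` has maximum cardinality. -/
structure IsKonigCover (adj : α → α → Prop) (N : Finset (α × α)) (K : Set α) : Prop where
  covers : ∀ a b, adj a b → a ∈ K ∨ b ∈ K
  matched : ∀ a ∈ K, matchedBy N a
  notMem_of_inMatch : ∀ a b, inMatch N a b → a ∈ K → b ∉ K

lemma IsKonigCover.exists_injOn (hK : IsKonigCover adj N K) :
    ∃ f : α → α × α, Set.MapsTo f K N ∧ Set.InjOn f K := by
  choose! f hf using hK.matched
  refine ⟨f, fun a ha ↦ (hf a ha).1, fun a ha b hb hab ↦ ?_⟩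
  by_contra hne
  have hab : inMatch N a b := by
    have := hf a ha
    have := hf b hb
    grind [inMatch]
  exact hK.notMem_of_inMatch a b hab ha hb

lemma IsKonigCover.finite (hK : IsKonigCover adj N K) : K.Finite :=
  let ⟨_, hf, hinj⟩ := hK.exists_injOn
  .of_injOn hf hinj N.finite_toSet

lemma IsKonigCover.ncard_le (hK : IsKonigCover adj N K) : K.ncard ≤ #N := by
  obtain ⟨f, hf, hinj⟩ := hK.exists_injOn
  simpa using Set.ncard_le_ncard_of_injOn f hf hinj

/-- Along an alternating path that starts in `K` with a matched edge, every other node is in `K`,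
while the last node is unmatched. -/
lemma IsKonigCover.not_evenAltFrom (hK : IsKonigCover adj N K) {a : α} (ha : a ∈ K) :
    ¬ EvenAltFrom adj N a := by
  rw [evenAltFrom_iff]
  rintro ⟨p, hp⟩
  suffices ∀ q, IsEvenAltPath adj N q → ∀ a ∈ q.head?, a ∉ K from this _ hp a rfl ha
  intro q hq
  induction hq with
  | singleton h => simpa using mt (hK.matched _) h
  | @cons_cons a y b _ _ _ _ hyb hNay _ _ ih =>
    have hyK : y ∈ K := (hK.covers y b hyb).resolve_right (ih b rfl)
    simpa using fun haK ↦ hK.notMem_of_inMatch a y hNay haK hyK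

/-- In a bipartite graph with a Kőnig cover, the Kőnig cover that is largest on the side `S`. -/
def konigCover (adj : α → α → Prop) (N : Finset (α × α)) (S : Set α) : Set α :=
  {a | a ∈ S ∧ ¬ EvenAltFrom adj N a ∨ a ∉ S ∧ ∃ b, adj a b ∧ EvenAltFrom adj N b}

lemma mem_konigCover_of_mem {S : Set α} {a : α} (ha : a ∈ S) :
    a ∈ konigCover adj N S ↔ ¬ EvenAltFrom adj N a := by
  simp [konigCover, ha]

lemma mem_konigCover_of_notMem {S : Set α} {a : α} (ha : a ∉ S) :
    a ∈ konigCover adj N S ↔ ∃ b, adj a b ∧ EvenAltFrom adj N b := by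
  simp [konigCover, ha]

lemma IsKonigCover.isKonigCover_konigCover [Std.Symm adj] (hK : IsKonigCover adj N K)
    (hN : IsUMatching adj N) {S : Set α} (hS : ∀ a b, adj a b → (a ∈ S ↔ b ∉ S)) :
    IsKonigCover adj N (konigCover adj N S) where
  covers a b hab := by
    wlog ha : a ∈ S generalizing a b
    · exact (this b a (symm_of adj hab) (by grind)).symm
    rw [mem_konigCover_of_mem ha, mem_konigCover_of_notMem ((hS a b hab).1 ha)]
    by_cases hE : EvenAltFrom adj N a
    · exact .inr ⟨a, symm_of adj hab, hE⟩
    · exact .inl hE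
  matched a ha := by
    rcases ha with ⟨-, ha⟩ | ⟨-, b, hab, hb⟩
    · exact not_imp_comm.1 evenAltFrom_of_not_matchedBy ha
    · exact hK.matched a ((hK.covers a b hab).resolve_right fun h ↦ hK.not_evenAltFrom h hb)
  notMem_of_inMatch a b hab := by
    have hside := hS a b (hN.adj_of_inMatch hab)
    wlog ha : a ∈ S generalizing a b
    · exact fun haK hbK ↦ this b a (inMatch_comm.1 hab) (by grind) (by grind) hbK haK
    rw [mem_konigCover_of_mem ha, mem_konigCover_of_notMem (hside.1 ha)]
    rintro hE ⟨c, hbc, hc⟩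
    exact hE (hc.extend hN hS hab hbc)

end KonigCovers

section Unfolding

variable {U : Type*} {X Y : Finset U} {w : U → U → ℕ} {M : Finset (U × U)}

instance : Std.Symm (phiAdj X Y w) := ⟨fun _ _ ↦ Or.symm⟩

lemma phiAdj_mem_left_iff (hXY : Disjoint X Y) (a b : U × ℕ) (hab : phiAdj X Y w a b) :
    a ∈ {a : U × ℕ | a.1 ∈ X} ↔ b ∉ {a : U × ℕ | a.1 ∈ X} := by
  have := Finset.disjoint_left.1 hXY
  grind [phiAdj]

lemma phiAdj_mem_right_iff (hXY : Disjoint X Y) (a b : U × ℕ) (hab : phiAdj X Y w a b) :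
    a ∈ {a : U × ℕ | a.1 ∈ Y} ↔ b ∉ {a : U × ℕ | a.1 ∈ Y} := by
  have := Finset.disjoint_left.1 hXY
  grind [phiAdj]

/-- The number of copies of the node `v` in `K`, which turns a vertex cover `K` of the unfolded
graph into a weighted cover of the original one. -/
noncomputable def copyCount (K : Set (U × ℕ)) (v : U) : ℕ := {i | (v, i) ∈ K}.ncard

lemma finite_setOf_mk_mem {K : Set (U × ℕ)} (hK : K.Finite) (v : U) : {i | (v, i) ∈ K}.Finite :=
  hK.preimage (Prod.mk_right_injective v).injOn

/-- The edges `x^i y^(β+1-i)` match the first `β` copies of `x` with those of `y`. -/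
lemma isCover_copyCount {K : Set (U × ℕ)} (hK : K.Finite)
    (hcov : ∀ a b, phiAdj X Y w a b → a ∈ K ∨ b ∈ K) : IsCover X Y w (copyCount K) := by
  intro x hx y hy
  set β := w x y
  have hx_fin := finite_setOf_mk_mem hK x
  have hy_fin := finite_setOf_mk_mem hK y
  have hsub : Set.Icc 1 β ⊆ {i | (x, i) ∈ K} ∪ (β + 1 - ·) '' {j | (y, j) ∈ K} := by
    rintro i ⟨hi1, hiβ⟩
    have hadj : phiAdj X Y w (x, i) (y, β + 1 - i) := by grind [phiAdj]
    exact (hcov _ _ hadj).imp id fun h ↦ ⟨_, h, by grind⟩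
  calc β = (Set.Icc 1 β).ncard := by simp [Set.ncard_eq_toFinset_card']
    _ ≤ _ := Set.ncard_le_ncard hsub (hx_fin.union (hy_fin.image _))
    _ ≤ _ := Set.ncard_union_le _ _
    _ ≤ copyCount K x + copyCount K y := by gcongr <;> [rfl; exact Set.ncard_image_le hy_fin]

lemma sum_copyCount_le {K : Set (U × ℕ)} (hK : K.Finite) (s : Finset U) :
    ∑ v ∈ s, copyCount K v ≤ K.ncard := by
  classical
  lift K to Finset (U × ℕ) using hK
  have hcopy (v : U) : copyCount K v = #{a ∈ K | a.1 = v} := by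
    rw [copyCount, ← Set.ncard_image_of_injective _ (Prod.mk_right_injective v),
      ← Set.ncard_coe_finset]
    congr 1
    ext ⟨v', i⟩
    simp only [Set.mem_image, Set.mem_ofPred_eq, Prod.mk.injEq, SetLike.mem_coe, coe_filter]
    grind
  simp only [hcopy, Set.ncard_coe_finset]
  exact (sum_card_fiberwise_eq_card_filter K s Prod.fst).trans_le (card_filter_le _ _)

variable [DecidableEq U]

/-- The copies `v^1, …, v^(C v)` of all nodes `v`, which turn a weighted cover `C` into a vertex
cover of the unfolded graph. -/
def coverCopies (X Y : Finset U) (C : U → ℕ) : Set (U × ℕ) :=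
  {a | a.1 ∈ X ∪ Y ∧ 1 ≤ a.2 ∧ a.2 ≤ C a.1}

lemma mem_phiM {a b : U × ℕ} : (a, b) ∈ phiM w M ↔
    (a.1, b.1) ∈ M ∧ 1 ≤ a.2 ∧ 1 ≤ b.2 ∧ a.2 + b.2 = w a.1 b.1 + 1 := by
  obtain ⟨x, i⟩ := a
  obtain ⟨y, j⟩ := b
  simp only [phiM, Finset.mem_biUnion, Finset.mem_image, Finset.mem_Icc, Prod.mk.injEq]
  constructor
  · rintro ⟨e, he, k, hk, ⟨rfl, rfl⟩, rfl, rfl⟩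
    exact ⟨he, by omega⟩
  · rintro ⟨he, hi, hj, hij⟩
    exact ⟨(x, y), he, i, by grind, ⟨rfl, rfl⟩, rfl, by grind⟩

lemma matchedBy_phiM {a : U × ℕ} : matchedBy (phiM w M) a ↔
    ∃ e ∈ M, (e.1 = a.1 ∨ e.2 = a.1) ∧ 1 ≤ a.2 ∧ a.2 ≤ w e.1 e.2 := by
  constructor
  · rintro ⟨⟨b, c⟩, h, rfl | rfl⟩ <;> obtain ⟨he, h1, h2, h3⟩ := mem_phiM.1 h
    · exact ⟨_, he, .inl rfl, h1, by grind⟩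
    · exact ⟨_, he, .inr rfl, h2, by grind⟩
  · obtain ⟨v, i⟩ := a
    rintro ⟨⟨x, y⟩, he, rfl | rfl, h1, h2⟩
    · exact ⟨((x, i), (y, w x y + 1 - i)), mem_phiM.2 ⟨he, by grind⟩, .inl rfl⟩
    · exact ⟨((x, w x y + 1 - i), (y, i)), mem_phiM.2 ⟨he, by grind⟩, .inr rfl⟩

lemma card_phiM_le : #(phiM w M) ≤ mWt w M :=
  card_biUnion_le.trans (sum_le_sum fun _ _ ↦ card_image_le.trans (by simp))

lemma IsBMatching.isUMatching_phiM (hXY : Disjoint X Y) (hM : IsBMatching X Y w M) :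
    IsUMatching (phiAdj X Y w) (phiM w M) := by
  have hdisj := Finset.disjoint_left.1 hXY
  refine ⟨?_, ?_, ?_⟩
  · rintro ⟨a, b⟩ h
    obtain ⟨he, h⟩ := mem_phiM.1 h
    exact .inl ⟨(hM.1 _ he).1, (hM.1 _ he).2.1, h.1, h.2.1, (hM.1 _ he).2.2, h.2.2⟩
  · rintro ⟨a, b⟩ h (rfl : a = b)
    have := hM.1 _ (mem_phiM.1 h).1
    grind
  · rintro ⟨⟨a, i⟩, ⟨b, j⟩⟩ h ⟨⟨c, k⟩, ⟨d, l⟩⟩ h' hne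
    obtain ⟨he, hij⟩ := mem_phiM.1 h
    obtain ⟨hf, hkl⟩ := mem_phiM.1 h'
    have := hM.1 _ he
    have := hM.1 _ hf
    have := hM.2 _ he _ hf
    grind

lemma le_alphaCopies_of_mem {e : U × U} (hx : e.1 ∈ X) (hy : e.2 ∈ Y) {v : U}
    (hv : e.1 = v ∨ e.2 = v) : w e.1 e.2 ≤ alphaCopies X Y w v := by
  rcases hv with rfl | rfl
  · exact (le_max_left _ _).trans
      (le_sup (f := fun v ↦ max (w e.1 v) (w v e.1)) (mem_union_right X hy))
  · exact (le_max_right _ _).trans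
      (le_sup (f := fun v ↦ max (w e.2 v) (w v e.2)) (mem_union_left Y hx))

end Unfolding

section Duality

variable {U : Type*} {X Y : Finset U} {w : U → U → ℕ} {M : Finset (U × U)} {C : U → ℕ}

lemma IsBMatching.mWt_le_sum (hM : IsBMatching X Y w M) (hC : IsCover X Y w C) :
    mWt w M ≤ ∑ e ∈ M, (C e.1 + C e.2) :=
  sum_le_sum fun e he ↦ hC _ (hM.1 e he).1 _ (hM.1 e he).2.1

variable [DecidableEq U]

lemma coverWt_add_single {v : U} (hv : v ∈ X ∪ Y) (n : ℕ) :
    coverWt X Y (C + Pi.single v n) = coverWt X Y C + n := by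
  simp only [coverWt, Pi.add_apply, sum_add_distrib, sum_pi_single', if_pos hv]

open Classical in
lemma IsBMatching.sum_add_sum_not_matchedBy (hXY : Disjoint X Y) (hM : IsBMatching X Y w M)
    (C : U → ℕ) :
    ∑ e ∈ M, (C e.1 + C e.2) + ∑ v ∈ X ∪ Y with ¬ matchedBy M v, C v = coverWt X Y C := by
  have hdisj := Finset.disjoint_left.1 hXY
  have hfst : Set.InjOn Prod.fst (M : Set (U × U)) := fun e he f hf h ↦
    not_imp_not.1 (fun hne ↦ (hM.2 e he f hf hne).1) h
  have hsnd : Set.InjOn Prod.snd (M : Set (U × U)) := fun e he f hf h ↦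
    not_imp_not.1 (fun hne ↦ (hM.2 e he f hf hne).2) h
  have hends : Disjoint (M.image Prod.fst) (M.image Prod.snd) := by
    rw [Finset.disjoint_left]
    grind [IsBMatching]
  have hmatched : {v ∈ X ∪ Y | matchedBy M v} = M.image Prod.fst ∪ M.image Prod.snd := by
    ext v
    grind [IsBMatching, matchedBy]
  rw [coverWt, ← sum_filter_add_sum_filter_not (X ∪ Y) (matchedBy M), hmatched, sum_union hends,
    sum_image hfst, sum_image hsnd, sum_add_distrib]

lemma IsBMatching.mWt_le_coverWt (hXY : Disjoint X Y) (hM : IsBMatching X Y w M)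
    (hC : IsCover X Y w C) : mWt w M ≤ coverWt X Y C := by
  classical
  exact (hM.mWt_le_sum hC).trans (hM.sum_add_sum_not_matchedBy hXY C ▸ Nat.le_add_right _ _)

lemma IsBMatching.add_eq_of_coverWt_le (hXY : Disjoint X Y) (hM : IsBMatching X Y w M)
    (hC : IsCover X Y w C) (hopt : coverWt X Y C ≤ mWt w M) {e : U × U} (he : e ∈ M) :
    C e.1 + C e.2 = w e.1 e.2 := by
  classical
  have hsum := hM.sum_add_sum_not_matchedBy hXY C
  have heq : ∑ e ∈ M, w e.1 e.2 = ∑ e ∈ M, (C e.1 + C e.2) :=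
    (hM.mWt_le_sum hC).antisymm (by grind [mWt])
  have hle : ∀ e ∈ M, w e.1 e.2 ≤ C e.1 + C e.2 :=
    fun e he ↦ hC _ (hM.1 e he).1 _ (hM.1 e he).2.1
  exact ((sum_eq_sum_iff_of_le hle).1 heq e he).symm

lemma IsBMatching.eq_zero_of_coverWt_le (hXY : Disjoint X Y) (hM : IsBMatching X Y w M)
    (hC : IsCover X Y w C) (hopt : coverWt X Y C ≤ mWt w M) {v : U} (hv : v ∈ X ∪ Y)
    (hvM : ¬ matchedBy M v) : C v = 0 := by
  classical
  have hsum := hM.sum_add_sum_not_matchedBy hXY C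
  have hle := hM.mWt_le_sum hC
  have hv_le : C v ≤ ∑ v ∈ X ∪ Y with ¬ matchedBy M v, C v :=
    single_le_sum (fun _ _ ↦ Nat.zero_le _) (mem_filter.2 ⟨hv, hvM⟩)
  omega

lemma IsBMatching.isKonigCover_coverCopies (hXY : Disjoint X Y) (hM : IsBMatching X Y w M)
    (hC : IsCover X Y w C) (hopt : coverWt X Y C ≤ mWt w M) :
    IsKonigCover (phiAdj X Y w) (phiM w M) (coverCopies X Y C) where
  covers a b hab := by
    rcases hab with ⟨ha, hb, hab⟩ | ⟨hb, ha, hab⟩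
    · have := hC _ ha _ hb
      grind [coverCopies]
    · have := hC _ hb _ ha
      grind [coverCopies]
  matched := by
    rintro ⟨v, i⟩ ⟨hv, hi1, hi⟩
    obtain ⟨e, he, hev⟩ : matchedBy M v := by
      by_contra h
      have := hM.eq_zero_of_coverWt_le hXY hC hopt hv h
      omega
    have htight := hM.add_eq_of_coverWt_le hXY hC hopt he
    exact matchedBy_phiM.2 ⟨e, he, hev, hi1, by grind⟩
  notMem_of_inMatch := by
    rintro a b (hab | hab) <;> obtain ⟨he, hab⟩ := mem_phiM.1 hab <;>
      have htight := hM.add_eq_of_coverWt_le hXY hC hopt he <;> grind [coverCopies]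

lemma IsKonigCover.coverWt_copyCount_le {K : Set (U × ℕ)}
    (hK : IsKonigCover (phiAdj X Y w) (phiM w M) K) : coverWt X Y (copyCount K) ≤ mWt w M :=
  (sum_copyCount_le hK.finite _).trans (hK.ncard_le.trans card_phiM_le)

end Duality

section Egervary

variable {ι κ : Type*} [Fintype ι] [Fintype κ] {c : ι → κ → ℤ} {a : ι → ℤ} {b : κ → ℤ}

/-- The Hungarian-method step: if the tight pairs violate Hall's condition at `s`, lowering `a` by
one on `s` and raising `b` by one on `t` keeps all constraints. -/
lemma exists_sum_add_sum_lt (hab : ∀ x y, c x y ≤ a x + b y) {s : Finset ι} {t : Finset κ}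
    (hst : ∀ x ∈ s, ∀ y, c x y = a x + b y → y ∈ t) (hcard : #t < #s) :
    ∃ (a' : ι → ℤ) (b' : κ → ℤ), (∀ x y, c x y ≤ a' x + b' y) ∧
      ∑ x, a' x + ∑ y, b' y < ∑ x, a x + ∑ y, b y := by
  classical
  refine ⟨fun x ↦ a x - if x ∈ s then 1 else 0, fun y ↦ b y + if y ∈ t then 1 else 0, ?_, ?_⟩
  · intro x y
    have := hab x y
    have := hst x
    grind
  · simp only [sum_sub_distrib, sum_add_distrib, sum_boole, filter_univ_mem]
    omega

lemma exists_potentials_tight_perm {ι : Type*} [Finite ι] (c : ι → ι → ℤ) :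
    ∃ (a b : ι → ℤ) (σ : Equiv.Perm ι), (∀ x y, c x y ≤ a x + b y) ∧
      ∀ x, c x (σ x) = a x + b (σ x) := by
  classical
  have := Fintype.ofFinite ι
  obtain ⟨_, ⟨a, b, hab, rfl⟩, hmin⟩ := Int.exists_least_of_bdd
    (P := fun n ↦ ∃ a b : ι → ℤ, (∀ x y, c x y ≤ a x + b y) ∧ ∑ x, a x + ∑ y, b y = n)
    ⟨∑ x, c x x, by
      rintro _ ⟨a, b, hab, rfl⟩
      exact sum_add_distrib (f := a) ▸ sum_le_sum fun x _ ↦ hab x x⟩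
    ⟨_, fun x ↦ ∑ y, |c x y|, 0, fun x y ↦ by
      simpa using (le_abs_self _).trans (single_le_sum (f := fun y ↦ |c x y|)
        (fun _ _ ↦ abs_nonneg _) (mem_univ y)), rfl⟩
  obtain ⟨σ, hσ, htight⟩ := (all_card_le_biUnion_card_iff_exists_injective
    fun x ↦ {y | c x y = a x + b y}).1 fun s ↦ by
      by_contra! hs
      obtain ⟨a', b', hab', hlt⟩ := exists_sum_add_sum_lt hab (by grind) hs
      exact hlt.not_ge (hmin _ ⟨a', b', hab', rfl⟩)
  exact ⟨a, b, .ofBijective σ (Finite.injective_iff_bijective.1 hσ), hab, by simpa using htight⟩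

lemma exists_nat_potentials_tight_perm {ι : Type*} [Finite ι] (c : ι → ι → ℕ) :
    ∃ (a b : ι → ℕ) (σ : Equiv.Perm ι), (∀ x y, c x y ≤ a x + b y) ∧
      ∀ x, c x (σ x) = a x + b (σ x) := by
  cases isEmpty_or_nonempty ι
  · exact ⟨0, 0, 1, isEmptyElim, isEmptyElim⟩
  obtain ⟨a, b, σ, hab, htight⟩ := exists_potentials_tight_perm fun x y ↦ (c x y : ℤ)
  obtain ⟨y₀, hy₀⟩ := Finite.exists_min b
  have ha (x : ι) : 0 ≤ a x + b y₀ := (Int.natCast_nonneg _).trans (hab x y₀)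
  exact ⟨fun x ↦ (a x + b y₀).toNat, fun y ↦ (b y - b y₀).toNat, σ, by grind, by grind⟩

end Egervary

section OptimalCovers

variable {U : Type*} [Fintype U] {X Y : Finset U} {w : U → U → ℕ} {M : Finset (U × U)}
  {C : U → ℕ}

lemma IsBMatching.mWt_le_mwm (hM : IsBMatching X Y w M) : mWt w M ≤ mwm X Y w := by
  classical
  exact le_sup (f := mWt w) (by simpa using hM)

lemma mwm_le_iff {n : ℕ} : mwm X Y w ≤ n ↔ ∀ M, IsBMatching X Y w M → mWt w M ≤ n := by
  simp [mwm]

/-- An optimal cover: by weak duality its weight, at most `mwm`, is the least weight of a cover. -/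
structure IsOptimalCover [DecidableEq U] (X Y : Finset U) (w : U → U → ℕ) (C : U → ℕ) : Prop where
  isCover : IsCover X Y w C
  coverWt_le : coverWt X Y C ≤ mwm X Y w

variable [DecidableEq U]

lemma IsCover.mwm_le_coverWt (hXY : Disjoint X Y) (hC : IsCover X Y w C) :
    mwm X Y w ≤ coverWt X Y C :=
  mwm_le_iff.2 fun _ hM ↦ hM.mWt_le_coverWt hXY hC

lemma sum_le_mwm_of_injective {f : U → U} (hf : f.Injective) :
    ∑ x with x ∈ X ∧ f x ∈ Y, w x (f x) ≤ mwm X Y w := by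
  set s : Finset U := {x | x ∈ X ∧ f x ∈ Y}
  let A : Finset U := {x ∈ s | 0 < w x (f x)}
  have hA : IsBMatching X Y w (A.image fun x ↦ (x, f x)) := by
    constructor
    · simp only [forall_mem_image]
      grind
    · simp only [forall_mem_image]
      grind [Function.Injective]
  calc ∑ x ∈ s, w x (f x)
    _ = ∑ x ∈ A, w x (f x) := (sum_filter_of_ne fun _ _ ↦ Nat.pos_of_ne_zero).symm
    _ = mWt w (A.image fun x ↦ (x, f x)) := by
      rw [mWt, sum_image fun _ _ _ _ h ↦ congrArg Prod.fst h]
    _ ≤ mwm X Y w := hA.mWt_le_mwm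

lemma exists_isOptimalCover (hXY : Disjoint X Y) (w : U → U → ℕ) :
    ∃ C, IsOptimalCover X Y w C := by
  obtain ⟨a, b, σ, hab, htight⟩ :=
    exists_nat_potentials_tight_perm fun x y ↦ if x ∈ X ∧ y ∈ Y then w x y else 0
  refine ⟨fun v ↦ if v ∈ X then a v else b v, fun x hx y hy ↦ ?_, ?_⟩
  · simpa [hx, hy, disjoint_right.1 hXY hy] using hab x y
  · calc ∑ v ∈ X ∪ Y, (if v ∈ X then a v else b v)
      _ ≤ ∑ v, (if v ∈ X then a v else b v) := sum_le_univ_sum_of_nonneg fun _ ↦ Nat.zero_le _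
      _ ≤ ∑ v, (a v + b v) := by gcongr; grind
      _ = ∑ x, a x + ∑ x, b (σ x) := by rw [sum_add_distrib, Equiv.sum_comp σ b]
      _ = ∑ x with x ∈ X ∧ σ x ∈ Y, w x (σ x) := by
        rw [← sum_add_distrib, sum_filter]; exact sum_congr rfl fun x _ ↦ (htight x).symm
      _ ≤ mwm X Y w := sum_le_mwm_of_injective σ.injective

end OptimalCovers

section NodeDeletion

variable {U : Type*} [Fintype U] {X Y : Finset U} {w : U → U → ℕ}

lemma mwm_mono {w' : U → U → ℕ} (h : ∀ x y, w x y ≤ w' x y) : mwm X Y w ≤ mwm X Y w' := by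
  refine mwm_le_iff.2 fun M hM ↦ (sum_le_sum fun _ _ ↦ h _ _).trans (IsBMatching.mWt_le_mwm ?_)
  exact ⟨fun e he ↦ ⟨(hM.1 e he).1, (hM.1 e he).2.1, (hM.1 e he).2.2.trans_le (h _ _)⟩, hM.2⟩

variable [DecidableEq U] {C : U → ℕ} {u : U}

/-- The edge weights after the node `u` has been deleted. -/
def deleteNode (w : U → U → ℕ) (u : U) : U → U → ℕ :=
  fun x y ↦ if x = u ∨ y = u then 0 else w x y

/-- The edge weights after those of the edges at `u` have been lowered by `t`. The truncation of the
subtraction is intended: an edge of weight at most `t` disappears. -/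
def lowerAt (w : U → U → ℕ) (u : U) (t : ℕ) : U → U → ℕ :=
  fun x y ↦ if x = u ∨ y = u then w x y - t else w x y

/-- A matching of the lowered graph either avoids `u` or gains weight `t` when read in `w`. -/
lemma mwm_lowerAt_le (X Y : Finset U) (w : U → U → ℕ) (u : U) (t : ℕ) :
    mwm X Y (lowerAt w u t) ≤ max (mwm X Y (deleteNode w u)) (mwm X Y w - t) := by
  refine mwm_le_iff.2 fun M hM ↦ le_max_iff.2 ?_
  by_cases hu : ∃ e ∈ M, e.1 = u ∨ e.2 = u
  · obtain ⟨e, he, heu⟩ := hu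
    have hMw : IsBMatching X Y w M := ⟨fun f hf ↦ by grind [hM.1 f hf, lowerAt], hM.2⟩
    have hgain : mWt (lowerAt w u t) M + t ≤ mWt w M :=
      calc mWt (lowerAt w u t) M + t
        _ = ∑ f ∈ M, (lowerAt w u t f.1 f.2 + if f = e then t else 0) := by
          simp [sum_add_distrib, he, mWt]
        _ ≤ mWt w M := sum_le_sum fun f hf ↦ by grind [hM.1 f hf, lowerAt]
    exact .inr (Nat.le_sub_of_add_le (hgain.trans hMw.mWt_le_mwm))
  · have hw : ∀ e ∈ M, lowerAt w u t e.1 e.2 = deleteNode w u e.1 e.2 := by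
      grind [lowerAt, deleteNode]
    have hMdel : IsBMatching X Y (deleteNode w u) M := ⟨fun e he ↦ hw e he ▸ hM.1 e he, hM.2⟩
    exact .inl ((sum_congr rfl hw).trans_le hMdel.mWt_le_mwm)

lemma IsOptimalCover.apply_le (hXY : Disjoint X Y) (hC : IsOptimalCover X Y w C)
    (hu : u ∈ X ∪ Y) : C u ≤ mwm X Y w - mwm X Y (deleteNode w u) := by
  have hcover : IsCover X Y (deleteNode w u) (Function.update C u 0) := fun x hx y hy ↦ by
    grind [hC.isCover x hx y hy, deleteNode, Function.update_apply]
  have hwt : coverWt X Y (Function.update C u 0) + C u = coverWt X Y C := by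
    rw [← coverWt_add_single hu]
    congr 1
    ext v
    grind [Function.update_apply, Pi.add_apply]
  have := hcover.mwm_le_coverWt hXY
  have := hC.coverWt_le
  omega

/-- Adding `t` at `u` to an optimal cover of the graph lowered by the right-hand side `t`. -/
lemma exists_isOptimalCover_le_apply (hXY : Disjoint X Y) (w : U → U → ℕ) (hu : u ∈ X ∪ Y) :
    ∃ C, IsOptimalCover X Y w C ∧ mwm X Y w - mwm X Y (deleteNode w u) ≤ C u := by
  set t := mwm X Y w - mwm X Y (deleteNode w u)
  obtain ⟨C, hC, hCopt⟩ := exists_isOptimalCover hXY (lowerAt w u t)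
  refine ⟨C + Pi.single u t, ⟨fun x hx y hy ↦ ?_, ?_⟩, by simp⟩
  · grind [hC x hx y hy, lowerAt, Pi.add_apply]
  · have hlower := mwm_lowerAt_le X Y w u t
    have hdel : mwm X Y (deleteNode w u) ≤ mwm X Y w := mwm_mono (by grind [deleteNode])
    rw [coverWt_add_single hu]
    omega

lemma isGreatest_optimalCover_apply (hXY : Disjoint X Y) (w : U → U → ℕ) (hu : u ∈ X ∪ Y) :
    IsGreatest {n | ∃ C, IsOptimalCover X Y w C ∧ C u = n}
      (mwm X Y w - mwm X Y (deleteNode w u)) := by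
  obtain ⟨C, hC, hle⟩ := exists_isOptimalCover_le_apply hXY w hu
  exact ⟨⟨C, hC, (hC.apply_le hXY hu).antisymm hle⟩,
    by rintro _ ⟨C, hC, rfl⟩; exact hC.apply_le hXY hu⟩

end NodeDeletion

section Cavities

variable {U : Type*} [DecidableEq U] {X Y : Finset U} {w : U → U → ℕ} {M : Finset (U × U)}
  {C : U → ℕ} {u : U}

/-- The number of copies of `u` from which no even-length alternating path starts, i.e. the sum of
the values `ρ(u^i)`. A pair `(u, i)` that is no node of `φ(G)` is unmatched and not counted. -/
noncomputable def cavityCount (X Y : Finset U) (w : U → U → ℕ) (M : Finset (U × U)) (u : U) : ℕ :=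
  {i | ¬ EvenAltFrom (phiAdj X Y w) (phiM w M) (u, i)}.ncard

lemma setOf_not_evenAltFrom_subset (hM : IsBMatching X Y w M) (u : U) :
    {i | ¬ EvenAltFrom (phiAdj X Y w) (phiM w M) (u, i)} ⊆ Set.Icc 1 (alphaCopies X Y w u) := by
  intro i hi
  obtain ⟨e, he, heu, hi1, hi⟩ := matchedBy_phiM.1 (not_imp_comm.1 evenAltFrom_of_not_matchedBy hi)
  exact ⟨hi1, hi.trans (le_alphaCopies_of_mem (hM.1 e he).1 (hM.1 e he).2.1 heu)⟩

open Classical in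
lemma sum_ite_evenAltFrom (hM : IsBMatching X Y w M) (u : U) :
    (∑ i ∈ Icc 1 (alphaCopies X Y w u),
      if EvenAltFrom (phiAdj X Y w) (phiM w M) (u, i) then 0 else 1) = cavityCount X Y w M u := by
  have hsub := setOf_not_evenAltFrom_subset hM u
  simp only [← ite_not (EvenAltFrom _ _ _), sum_boole, Nat.cast_id, cavityCount,
    ← Set.ncard_coe_finset]
  congr 1
  ext i
  simpa using @hsub i

variable [Fintype U]

lemma IsKonigCover.isOptimalCover_copyCount {K : Set (U × ℕ)} (hM : IsBMatching X Y w M)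
    (hK : IsKonigCover (phiAdj X Y w) (phiM w M) K) : IsOptimalCover X Y w (copyCount K) :=
  ⟨isCover_copyCount hK.finite hK.covers, hK.coverWt_copyCount_le.trans hM.mWt_le_mwm⟩

lemma IsOptimalCover.isKonigCover_coverCopies (hC : IsOptimalCover X Y w C) (hXY : Disjoint X Y)
    (hM : IsBMatching X Y w M) (hMmax : mwm X Y w ≤ mWt w M) :
    IsKonigCover (phiAdj X Y w) (phiM w M) (coverCopies X Y C) :=
  hM.isKonigCover_coverCopies hXY hC.isCover (hC.coverWt_le.trans hMmax)

lemma IsOptimalCover.apply_le_cavityCount (hC : IsOptimalCover X Y w C) (hXY : Disjoint X Y)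
    (hM : IsBMatching X Y w M) (hMmax : mwm X Y w ≤ mWt w M) (hu : u ∈ X ∪ Y) :
    C u ≤ cavityCount X Y w M u := by
  have hK := hC.isKonigCover_coverCopies hXY hM hMmax
  have hfin := (Set.finite_Icc _ _).subset (setOf_not_evenAltFrom_subset hM u)
  calc C u = (Set.Icc 1 (C u)).ncard := by simp [Set.ncard_eq_toFinset_card']
    _ ≤ cavityCount X Y w M u :=
      Set.ncard_le_ncard (fun i hi ↦ hK.not_evenAltFrom ⟨hu, hi⟩) hfin

lemma exists_isOptimalCover_apply_eq_cavityCount (hXY : Disjoint X Y) (hM : IsBMatching X Y w M)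
    (hMmax : mwm X Y w ≤ mWt w M) (hu : u ∈ X ∪ Y) :
    ∃ C, IsOptimalCover X Y w C ∧ C u = cavityCount X Y w M u := by
  obtain ⟨S, huS, hS⟩ : ∃ S : Set (U × ℕ), (∀ i, (u, i) ∈ S) ∧
      ∀ a b, phiAdj X Y w a b → (a ∈ S ↔ b ∉ S) := by
    rcases mem_union.1 hu with hu | hu
    · exact ⟨_, fun _ ↦ hu, phiAdj_mem_left_iff hXY⟩
    · exact ⟨_, fun _ ↦ hu, phiAdj_mem_right_iff hXY⟩
  obtain ⟨C, hC⟩ := exists_isOptimalCover hXY w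
  have hK := (hC.isKonigCover_coverCopies hXY hM hMmax).isKonigCover_konigCover
    (hM.isUMatching_phiM hXY) hS
  refine ⟨_, hK.isOptimalCover_copyCount hM, ?_⟩
  simp only [copyCount, cavityCount, mem_konigCover_of_mem (huS _)]

lemma isGreatest_cavityCount (hXY : Disjoint X Y) (hM : IsBMatching X Y w M)
    (hMmax : mwm X Y w ≤ mWt w M) (hu : u ∈ X ∪ Y) :
    IsGreatest {n | ∃ C, IsOptimalCover X Y w C ∧ C u = n} (cavityCount X Y w M u) :=
  ⟨exists_isOptimalCover_apply_eq_cavityCount hXY hM hMmax hu,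
    by rintro _ ⟨C, hC, rfl⟩; exact hC.apply_le_cavityCount hXY hM hMmax hu⟩

end Cavities

open Classical in
/-- All-cavity formula: with `ρ(u^i) = 0` if an even-length alternating path for
`φ(M)` starts at `u^i` and `ρ(u^i) = 1` otherwise,
`Σ_{1 ≤ i ≤ β} ρ(u^i) = mwm(G) - mwm(G - {u})`. -/
theorem cavity_formula
    (X Y : Finset V) (hXY : Disjoint X Y) (w : V → V → ℕ)
    (hisoX : ∀ x ∈ X, ∃ y ∈ Y, 0 < w x y)
    (hisoY : ∀ y ∈ Y, ∃ x ∈ X, 0 < w x y)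
    (M : Finset (V × V)) (hM : IsBMatching X Y w M)
    (hMmax : ∀ M' : Finset (V × V), IsBMatching X Y w M' → mWt w M' ≤ mWt w M)
    (u : V) (hu : u ∈ X ∪ Y) :
    (∑ i ∈ Finset.Icc 1 (alphaCopies X Y w u),
        if EvenAltFrom (phiAdj X Y w) (phiM w M) (u, i) then 0 else 1) =
      mwm X Y w - mwm X Y (fun x y => if x = u ∨ y = u then 0 else w x y) := by
  rw [sum_ite_evenAltFrom hM]
  exact (isGreatest_cavityCount hXY hM (mwm_le_iff.2 hMmax) hu).unique
    (isGreatest_optimalCover_apply hXY w hu)
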